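/- Let M be a lattice log concave integer-valued random variable whose support S satisfies a := inf S > −∞, and let d ∈ S. Then there exists an integer-valued random variable A defined on the same probability space as M with 0 ≤ A ≤ d − a almost surely such that M + A has the conditional distribution of M given M ≥ d. -/

import Mathlib

open MeasureTheory ProbabilityTheory

/-- The law of a lattice log concave integer valued random variable, presented as a
probability measure `μ` on `ℤ`: the support is an integer interval and the point
masses satisfy `p_{x-1} p_{x+1} ≤ p_x ^ 2`. -/
def IsLatticeLogConcave (μ : Measure ℤ) : Prop :=
  (∀ x y z : ℤ, x ≤ y → y ≤ z → μ {x} ≠ 0 → μ {z} ≠ 0 → μ {y} ≠ 0) ∧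
  (∀ x : ℤ, (μ {x - 1}).toReal * (μ {x + 1}).toReal ≤ (μ {x}).toReal ^ 2)

/-!
Conditioning on the upper set `{x ≥ d}` increases a law in the likelihood ratio order. Log concavity
says that the ratios `p (x + k) / p x` decrease in `x`; this makes the conditioned law smaller, in
the same order, than the law of `M + (d - a)`. The likelihood ratio order implies the stochastic
order, hence the order of quantile functions. So if `M` and its conditioned version `N` are the
quantile transforms of a single uniform variable, then `M ≤ N ≤ M + (d - a)`, and `A = N - M`.
-/

section Quantile

variable {α : Type*} [ConditionallyCompleteLinearOrder α] [MeasurableSpace α]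
  {μ : Measure α} {u : ℝ}

/-- The quantile function of a measure `μ`, the generalized inverse of its distribution function
`x ↦ μ (Iic x)`. It is only meaningful for levels `u` in `(0, 1)`: outside this interval the infimum
may be over an empty or unbounded set. -/
noncomputable def quantile (μ : Measure α) (u : ℝ) : α :=
  sInf {x | ENNReal.ofReal u ≤ μ (Set.Iic x)}

variable [TopologicalSpace α] [OrderTopology α] [SecondCountableTopology α]

lemma exists_le_measure_Iic [IsProbabilityMeasure μ] (hu : u < 1) :
    ∃ x, ENNReal.ofReal u ≤ μ (Set.Iic x) := by
  have : Nonempty α := nonempty_of_isProbabilityMeasure μ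
  have hu' : ENNReal.ofReal u < μ Set.univ := by
    rwa [measure_univ, ENNReal.ofReal_lt_one]
  obtain ⟨x, hx⟩ := ((tendsto_measure_Iic_atTop μ).eventually (lt_mem_nhds hu')).exists
  exact ⟨x, hx.le⟩

variable [BorelSpace α]

lemma bddBelow_setOf_le_measure_Iic [IsFiniteMeasure μ] (hu : 0 < u) :
    BddBelow {x | ENNReal.ofReal u ≤ μ (Set.Iic x)} := by
  by_contra hbdd
  have hle (x : α) : ENNReal.ofReal u ≤ μ (Set.Iic x) := by
    obtain ⟨y, hy, hyx⟩ := not_bddBelow_iff.1 hbdd x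
    exact hy.trans (measure_mono (Set.Iic_subset_Iic.2 hyx.le))
  have hempty : ⋂ x : α, Set.Iic x = ∅ := by
    refine Set.eq_empty_of_forall_notMem fun y hy => hbdd ⟨y, fun x _ => ?_⟩
    exact Set.mem_iInter.1 hy x
  have : Nonempty α := ⟨sInf ∅⟩
  have hlim := tendsto_measure_iInter_atBot (μ := μ) (s := fun x : α => Set.Iic x)
    (fun _ => measurableSet_Iic.nullMeasurableSet) (fun _ _ => Set.Iic_subset_Iic.2)
    ⟨sInf ∅, measure_ne_top _ _⟩
  rw [hempty, measure_empty] at hlim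
  exact (ENNReal.ofReal_pos.2 hu).not_ge (ge_of_tendsto' hlim hle)

lemma le_measure_Iic_sInf [IsFiniteMeasure μ] {c : ENNReal}
    (hne : {x | c ≤ μ (Set.Iic x)}.Nonempty) (hbdd : BddBelow {x | c ≤ μ (Set.Iic x)}) :
    c ≤ μ (Set.Iic (sInf {x | c ≤ μ (Set.Iic x)})) := by
  obtain ⟨x, hanti, hlim, hx⟩ := exists_seq_tendsto_sInf hne hbdd
  have hInter : ⋂ n, Set.Iic (x n) = Set.Iic (sInf {x | c ≤ μ (Set.Iic x)}) := by
    ext y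
    simp only [Set.mem_iInter, Set.mem_Iic]
    exact ⟨ge_of_tendsto' hlim, fun hy n => hy.trans (csInf_le hbdd (hx n))⟩
  rw [← hInter]
  exact ge_of_tendsto' (tendsto_measure_iInter_atTop
    (fun _ => measurableSet_Iic.nullMeasurableSet)
    (fun _ _ hmn => Set.Iic_subset_Iic.2 (hanti hmn)) ⟨0, measure_ne_top _ _⟩) hx

lemma quantile_le_iff [IsProbabilityMeasure μ] (hu : u ∈ Set.Ioo (0 : ℝ) 1) {x : α} :
    quantile μ u ≤ x ↔ ENNReal.ofReal u ≤ μ (Set.Iic x) := by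
  have hbdd := bddBelow_setOf_le_measure_Iic (μ := μ) hu.1
  refine ⟨fun hx => ?_, fun hx => csInf_le hbdd hx⟩
  exact (le_measure_Iic_sInf (exists_le_measure_Iic hu.2) hbdd).trans
    (measure_mono (Set.Iic_subset_Iic.2 hx))

lemma quantile_le_of_measure_Iic_le [IsProbabilityMeasure μ] {κ : Measure α}
    [IsProbabilityMeasure κ] (hu : u ∈ Set.Ioo (0 : ℝ) 1) {x : α}
    (h : μ (Set.Iic (quantile μ u)) ≤ κ (Set.Iic x)) : quantile κ u ≤ x :=
  (quantile_le_iff hu).2 (((quantile_le_iff hu).1 le_rfl).trans h)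

variable (μ)

lemma monotoneOn_quantile [IsProbabilityMeasure μ] :
    MonotoneOn (quantile μ) (Set.Ioo (0 : ℝ) 1) := fun _ hu _ hv huv =>
  (quantile_le_iff hu).2 ((ENNReal.ofReal_le_ofReal huv).trans ((quantile_le_iff hv).1 le_rfl))

lemma aemeasurable_quantile [IsProbabilityMeasure μ] :
    AEMeasurable (quantile μ) (volume.restrict (Set.Ioo (0 : ℝ) 1)) :=
  aemeasurable_restrict_of_monotoneOn measurableSet_Ioo (monotoneOn_quantile μ)

lemma map_quantile [IsProbabilityMeasure μ] :
    (volume.restrict (Set.Ioo (0 : ℝ) 1)).map (quantile μ) = μ := by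
  refine (Measure.ext_of_Iic _ _ fun x => ?_).symm
  have hpre : quantile μ ⁻¹' Set.Iic x ∩ Set.Ioo 0 1 =
      Set.Ioo 0 1 ∩ Set.Iic (μ (Set.Iic x)).toReal := by
    ext u
    rw [Set.inter_comm]
    refine and_congr_right fun hu => ?_
    exact (quantile_le_iff hu).trans (ENNReal.ofReal_le_iff_le_toReal (measure_ne_top _ _))
  have hIoc : (Set.Ioo 0 1 ∩ Set.Iic (μ (Set.Iic x)).toReal : Set ℝ) =ᵐ[volume]
      Set.Ioc 0 (μ (Set.Iic x)).toReal := by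
    have h1 : (μ (Set.Iic x)).toReal ≤ 1 := measureReal_le_one
    simpa only [Set.Ioc_inter_Iic, inf_eq_right.2 h1] using
      (Ioo_ae_eq_Ioc (a := (0 : ℝ)) (b := 1)).inter (ae_eq_refl (Set.Iic (μ (Set.Iic x)).toReal))
  rw [Measure.map_apply_of_aemeasurable (aemeasurable_quantile μ) measurableSet_Iic,
    Measure.restrict_apply' measurableSet_Ioo, hpre, measure_congr hIoc, Real.volume_Ioc, sub_zero,
    ENNReal.ofReal_toReal (measure_ne_top _ _)]

variable {μ}

lemma exists_coupling_add_of_measure_Iic_le [AddCommGroup α] [IsOrderedAddMonoid α]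
    [IsProbabilityMeasure μ] {κ : Measure α} [IsProbabilityMeasure κ] {c : α}
    (hlower : ∀ x, κ (Set.Iic x) ≤ μ (Set.Iic x))
    (hupper : ∀ x, μ (Set.Iic x) ≤ κ (Set.Iic (x + c))) :
    ∃ ν : Measure (α × α), IsProbabilityMeasure ν ∧ ν.map Prod.fst = μ ∧
      (∀ᵐ q ∂ν, 0 ≤ q.2 ∧ q.2 ≤ c) ∧ ν.map (fun q => q.1 + q.2) = κ := by
  have hmeas : AEMeasurable (fun u => (quantile μ u, quantile κ u - quantile μ u))
      (volume.restrict (Set.Ioo (0 : ℝ) 1)) :=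
    (aemeasurable_quantile μ).prodMk ((aemeasurable_quantile κ).sub (aemeasurable_quantile μ))
  have hfst := (AEMeasurable.map_map_of_aemeasurable measurable_fst.aemeasurable hmeas).trans
    (map_quantile μ)
  refine ⟨_, ?_, hfst, ?_, ?_⟩
  · have : IsProbabilityMeasure (volume.restrict (Set.Ioo (0 : ℝ) 1)) := ⟨by simp⟩
    exact Measure.isProbabilityMeasure_map hmeas
  · refine (ae_map_iff hmeas (measurable_snd (measurableSet_Icc (a := 0) (b := c)))).2 ?_
    filter_upwards [ae_restrict_mem measurableSet_Ioo] with u hu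
    exact ⟨sub_nonneg.2 (quantile_le_of_measure_Iic_le hu (hlower _)),
      sub_le_iff_le_add'.2 (quantile_le_of_measure_Iic_le hu (hupper _))⟩
  · rw [AEMeasurable.map_map_of_aemeasurable (by fun_prop) hmeas]
    simpa only [Function.comp_def, add_sub_cancel] using map_quantile κ

end Quantile

section LikelihoodRatio

variable {α : Type*} [MeasurableSpace α]

/-- The likelihood ratio order on measures on a countable ordered space: the ratio
`ν {x} / μ {x}` is nondecreasing in `x`. The condition is cross-multiplied, so that it makes sense
at points of measure zero. -/
def LikelihoodRatioLE [Preorder α] (μ ν : Measure α) : Prop :=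
  ∀ ⦃x y : α⦄, x ≤ y → μ {y} * ν {x} ≤ μ {x} * ν {y}

lemma measure_le_measure_of_forall_singleton [MeasurableSingletonClass α]
    {μ ν : Measure α} {s : Set α} (hs : s.Countable) (h : ∀ x ∈ s, μ {x} ≤ ν {x}) : μ s ≤ ν s := by
  have hsum (ρ : Measure α) : ρ s = ∑' x : s, ρ {x.1} := by
    simpa only [setLIntegral_one, one_mul] using lintegral_countable (μ := ρ) (fun _ => 1) hs
  rw [hsum, hsum]
  exact ENNReal.tsum_le_tsum fun x => h x x.2

lemma LikelihoodRatioLE.measure_Iic_le [LinearOrder α] [Countable α] [MeasurableSingletonClass α]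
    {μ ν : Measure α} [IsProbabilityMeasure μ] [IsProbabilityMeasure ν]
    (h : LikelihoodRatioLE μ ν) (x : α) : ν (Set.Iic x) ≤ μ (Set.Iic x) := by
  have hpoint (i : α) (hi : i ≤ x) : μ (Set.Ioi x) * ν {i} ≤ ν (Set.Ioi x) * μ {i} := by
    simpa [mul_comm] using measure_le_measure_of_forall_singleton (μ := ν {i} • μ)
      (ν := μ {i} • ν) (Set.to_countable (Set.Ioi x)) fun j hj => by
        simpa [mul_comm] using h (hi.trans (le_of_lt hj))
  have htail : μ (Set.Ioi x) * ν (Set.Iic x) ≤ ν (Set.Ioi x) * μ (Set.Iic x) :=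
    measure_le_measure_of_forall_singleton (μ := μ (Set.Ioi x) • ν) (ν := ν (Set.Ioi x) • μ)
      (Set.to_countable _) hpoint
  have htotal (ρ : Measure α) [IsProbabilityMeasure ρ] : ρ (Set.Iic x) + ρ (Set.Ioi x) = 1 := by
    rw [← Set.compl_Iic, prob_add_prob_compl (Set.to_countable _).measurableSet]
  calc ν (Set.Iic x)
      = μ (Set.Iic x) * ν (Set.Iic x) + μ (Set.Ioi x) * ν (Set.Iic x) := by
        rw [← add_mul, htotal μ, one_mul]
    _ ≤ μ (Set.Iic x) * ν (Set.Iic x) + ν (Set.Ioi x) * μ (Set.Iic x) := by gcongr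
    _ = μ (Set.Iic x) := by
        rw [mul_comm (ν (Set.Ioi x)), ← mul_add, htotal ν, mul_one]

lemma cond_singleton_of_mem (μ : Measure α) {s : Set α} {x : α} (hs : MeasurableSet s)
    (hx : x ∈ s) : μ[|s] {x} = (μ s)⁻¹ * μ {x} := by
  rw [cond_apply hs, Set.inter_singleton_of_mem hx]

lemma cond_singleton_of_notMem (μ : Measure α) {s : Set α} {x : α} (hs : MeasurableSet s)
    (hx : x ∉ s) : μ[|s] {x} = 0 := by
  rw [cond_apply hs, Set.inter_singleton_of_notMem hx, measure_empty, mul_zero]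

lemma likelihoodRatioLE_cond_of_isUpperSet [Preorder α] (μ : Measure α) {s : Set α}
    (hs : MeasurableSet s) (hup : IsUpperSet s) : LikelihoodRatioLE μ μ[|s] := by
  intro x y hxy
  by_cases hx : x ∈ s
  · rw [cond_singleton_of_mem μ hs hx, cond_singleton_of_mem μ hs (hup hxy hx)]
    exact le_of_eq (by ring)
  · simp only [cond_singleton_of_notMem μ hs hx, mul_zero, zero_le]

end LikelihoodRatio

section LogConcave

variable {R : Type*} [CommSemiring R] [LinearOrder R] [IsStrictOrderedRing R]

/- The product of the inequalities `a / y ≤ b / x` and `z / x ≤ w / y`. -/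
lemma mul_le_mul_of_cross_mul_le {a b w x y z : R} (hb : 0 ≤ b) (hw : 0 ≤ w) (hz : 0 ≤ z)
    (hpos : a ≠ 0 → z ≠ 0 → 0 < x ∧ 0 < y) (hab : a * x ≤ y * b) (hzw : y * z ≤ w * x) :
    a * z ≤ w * b := by
  obtain rfl | ha0 := eq_or_ne a 0
  · simpa only [zero_mul] using mul_nonneg hw hb
  obtain rfl | hz0 := eq_or_ne z 0
  · simpa only [mul_zero] using mul_nonneg hw hb
  obtain ⟨hx, hy⟩ := hpos ha0 hz0
  refine le_of_mul_le_mul_right ?_ (mul_pos hx hy)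
  calc a * z * (x * y) = (a * x) * (y * z) := by ring
    _ ≤ (y * b) * (w * x) := by gcongr
    _ = w * b * (x * y) := by ring

variable {p : ℤ → R}

lemma mul_apply_add_one_le_of_logConcave (h0 : ∀ x, 0 ≤ p x)
    (hsupp : (Function.support p).OrdConnected) (hlc : ∀ x, p (x - 1) * p (x + 1) ≤ p x ^ 2)
    {i j : ℤ} (hij : i ≤ j) : p i * p (j + 1) ≤ p (i + 1) * p j := by
  induction j, hij using Int.leInduction with
  | base => exact (mul_comm _ _).le
  | succ j hij ih =>
    have hpos (x : ℤ) (hi : p i ≠ 0) (hj : p (j + 1 + 1) ≠ 0) (hx : x ∈ Set.Icc i (j + 1 + 1)) :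
        0 < p x := (h0 x).lt_of_ne' (hsupp.out hi hj hx)
    have hstep : p j * p (j + 1 + 1) ≤ p (j + 1) * p (j + 1) := by
      simpa only [add_sub_cancel_right, sq] using hlc (j + 1)
    rw [mul_comm (p (i + 1))] at ih ⊢
    exact mul_le_mul_of_cross_mul_le (h0 _) (h0 _) (h0 _)
      (fun hi hj => ⟨hpos _ hi hj ⟨by lia, by lia⟩, hpos _ hi hj ⟨by lia, by lia⟩⟩) ih hstep

lemma mul_apply_add_le_of_logConcave (h0 : ∀ x, 0 ≤ p x)
    (hsupp : (Function.support p).OrdConnected) (hlc : ∀ x, p (x - 1) * p (x + 1) ≤ p x ^ 2)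
    {i j k : ℤ} (hij : i ≤ j) (hk : 0 ≤ k) : p i * p (j + k) ≤ p (i + k) * p j := by
  induction k, hk using Int.leInduction with
  | base => simp only [add_zero, le_refl]
  | succ k hk ih =>
    have hpos (x : ℤ) (hi : p i ≠ 0) (hj : p (j + (k + 1)) ≠ 0)
        (hx : x ∈ Set.Icc i (j + (k + 1))) : 0 < p x := (h0 x).lt_of_ne' (hsupp.out hi hj hx)
    have hstep : p (i + k) * p (j + (k + 1)) ≤ p (i + (k + 1)) * p (j + k) := by
      simpa only [add_assoc] using
        mul_apply_add_one_le_of_logConcave h0 hsupp hlc (add_le_add_left hij k)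
    exact mul_le_mul_of_cross_mul_le (h0 _) (h0 _) (h0 _)
      (fun hi hj => ⟨hpos _ hi hj ⟨by lia, by lia⟩, hpos _ hi hj ⟨by lia, by lia⟩⟩) ih hstep

end LogConcave

namespace IsLatticeLogConcave

variable {μ : Measure ℤ}

lemma ordConnected_support [IsFiniteMeasure μ] (h : IsLatticeLogConcave μ) :
    (Function.support fun x => μ.real {x}).OrdConnected := by
  refine ⟨fun x hx z hz y hy => ?_⟩
  rw [Function.mem_support, measureReal_ne_zero_iff] at hx hz ⊢
  exact h.1 x y z hy.1 hy.2 hx hz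

lemma measure_singleton_mul_le [IsFiniteMeasure μ] (h : IsLatticeLogConcave μ) {i j k : ℤ}
    (hij : i ≤ j) (hk : 0 ≤ k) : μ {i} * μ {j + k} ≤ μ {i + k} * μ {j} := by
  have hreal : μ.real {i} * μ.real {j + k} ≤ μ.real {i + k} * μ.real {j} :=
    mul_apply_add_le_of_logConcave (fun _ => measureReal_nonneg) h.ordConnected_support h.2 hij hk
  rw [← ENNReal.toReal_le_toReal (by finiteness) (by finiteness)]
  simpa only [ENNReal.toReal_mul, Measure.real] using hreal

lemma likelihoodRatioLE_cond_Ici_map_addRight [IsFiniteMeasure μ] (h : IsLatticeLogConcave μ)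
    {a d : ℤ} (ha : a ∈ lowerBounds {x | μ {x} ≠ 0}) (had : a ≤ d) :
    LikelihoodRatioLE μ[|Set.Ici d] (μ.map (OrderIso.addRight (d - a))) := by
  intro x y hxy
  have hmap (z : ℤ) : μ.map (OrderIso.addRight (d - a)) {z} = μ {z - (d - a)} := by
    rw [Measure.map_apply measurable_from_top (measurableSet_singleton z)]
    congr 1
    ext w
    simp [eq_sub_iff_add_eq]
  rw [hmap, hmap]
  by_cases hx : d ≤ x
  · rw [cond_singleton_of_mem μ measurableSet_Ici hx,
      cond_singleton_of_mem μ measurableSet_Ici (hx.trans hxy), mul_assoc, mul_assoc]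
    gcongr _ * ?_
    simpa only [sub_add_cancel, mul_comm (μ {y})] using
      h.measure_singleton_mul_le (sub_le_sub_right hxy (d - a)) (sub_nonneg.2 had)
  · have hnull : μ {x - (d - a)} = 0 := by
      by_contra hne
      have := ha hne
      lia
    simp only [hnull, mul_zero, zero_le]

lemma measure_Iic_le_cond_Ici [IsProbabilityMeasure μ] (h : IsLatticeLogConcave μ) {a d : ℤ}
    (ha : a ∈ lowerBounds {x | μ {x} ≠ 0}) (had : a ≤ d) (hd : μ (Set.Ici d) ≠ 0) (x : ℤ) :
    μ (Set.Iic x) ≤ μ[|Set.Ici d] (Set.Iic (x + (d - a))) := by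
  have := cond_isProbabilityMeasure hd
  have := Measure.isProbabilityMeasure_map (μ := μ) (f := OrderIso.addRight (d - a))
    measurable_from_top.aemeasurable
  have hle := (h.likelihoodRatioLE_cond_Ici_map_addRight ha had).measure_Iic_le (x + (d - a))
  rwa [Measure.map_apply measurable_from_top measurableSet_Iic, OrderIso.preimage_Iic,
    OrderIso.addRight_symm, OrderIso.addRight_apply, add_neg_cancel_right] at hle

end IsLatticeLogConcave

/-- For a lattice log concave `M` whose support has a finite infimum `a`, and any `d`
in the support, there is a coupling (a joint law `ν` of `(M, A)`) of `M` with an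
integer-valued `A` satisfying `0 ≤ A ≤ d - a` a.s. and such that `M + A` has the
law of `M` conditioned on `M ≥ d`. -/
theorem exists_bounded_coupling_ge_of_latticeLogConcave
    (μ : Measure ℤ) [IsProbabilityMeasure μ] (hLC : IsLatticeLogConcave μ)
    (a : ℤ) (ha : IsLeast {x : ℤ | μ {x} ≠ 0} a)
    (d : ℤ) (hd : μ {d} ≠ 0) :
    ∃ ν : Measure (ℤ × ℤ), IsProbabilityMeasure ν ∧
      Measure.map Prod.fst ν = μ ∧
      (∀ᵐ q ∂ν, 0 ≤ q.2 ∧ q.2 ≤ d - a) ∧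
      Measure.map (fun q : ℤ × ℤ => q.1 + q.2) ν = μ[|Set.Ici d] := by
  have hIci : μ (Set.Ici d) ≠ 0 := fun h =>
    hd (measure_mono_null (Set.singleton_subset_iff.2 Set.self_mem_Ici) h)
  have := cond_isProbabilityMeasure hIci
  have hcond : LikelihoodRatioLE μ μ[|Set.Ici d] :=
    likelihoodRatioLE_cond_of_isUpperSet μ measurableSet_Ici (isUpperSet_Ici d)
  exact exists_coupling_add_of_measure_Iic_le hcond.measure_Iic_le
    (hLC.measure_Iic_le_cond_Ici ha.2 (ha.2 hd) hIci)
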